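/- Let H_ω be a weighted analytic Hilbert space and let φ be an analytic self-map of the unit disk D with φ ∈ H_ω and ‖φ‖_∞ < 1. Then β⁻(C_φ) := liminf_{n→∞} [a_n(C_φ)]^{1/n} ≥ e^{−1/capa(φ(D))}, where capa(φ(D)) is the Green capacity of φ(D) in D. -/

import Mathlib

/-!
Fix `t > V(φ(D))` and a probability measure `μ` on a compact `K ⊆ φ(D)` with `I(μ) < t`. It suffices
to find a constant `C` with `a_n(C_φ) ≥ e^{-n s} / (C n²)` for some `s < t` and all large `n`.

*Points.* Averaging the discrete Green energy over independent samples of `μ` gives `m`-point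
configurations in `K` of energy at most `m (m - 1) I(μ)` (`exists_finEnergy_le`). The minimal
energies `e_m` satisfy Fekete's monotonicity `e_m / (m (m - 1)) ↑ e ≤ I(μ)`, so `e_m ∼ e m²`, and
near every large `n` there is `m ≥ n` with `e_{m+1} - e_m ≲ 2 n e`. Deleting one point from an almost
optimal configuration of `m + 1` points shows that every point of it has potential at most
`(e_{m+1} - e_m + 1) / 2`; as the Green function is nonnegative, the same holds after passing to `n`
of the points (`exists_config`). Thus no equilibrium measure is needed.

*Operator.* For such points `z_1, …, z_n` let `B_i` be the Blaschke product vanishing at all `z_j`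
with `j ≠ i`. Then `|B_i(z_i)| = exp(-∑_j g(z_i, z_j)) ≥ e^{-n s}`, and `‖B_i‖ = O(n)` in `H_ω`,
because the zeros stay in a fixed disk of radius `ρ < 1` (`blaschke_bounds`, `memHw_of_bounded`).
By the open mapping theorem `K ⊆ φ(r D̄)` for some `r < 1`, so `z_i = φ(u_i)` with `|u_i| ≤ r`, and
evaluations at the `u_i` are uniformly bounded on `H_ω` (`exists_eval_bound`). The functions
`B_i / B_i(z_i)` composed with `φ` are biorthogonal to these evaluations, and `le_approxNumber`
gives the lower bound.
-/
open MeasureTheory Set Filter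
open scoped ENNReal NNReal

noncomputable section

/-- The open unit disk in the complex plane. -/
def unitDisk : Set ℂ := {z : ℂ | ‖z‖ < 1}

/-- The Green function of the unit disk, `g(z,w) = log |(1 - w̄ z)/(z - w)|`,
with value `⊤` on the diagonal. -/
def greenFnE (z w : ℂ) : ℝ≥0∞ :=
  if z = w then ⊤ else ENNReal.ofReal (Real.log ‖(1 - (starRingEnd ℂ) w * z) / (z - w)‖)

/-- The Green energy `I(μ) = ∬ g(z,w) dμ(z) dμ(w)` of a measure. -/
def greenEnergy (μ : Measure ℂ) : ℝ≥0∞ := ∫⁻ z, ∫⁻ w, greenFnE z w ∂μ ∂μ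

/-- `greenV E = V(E)`: the infimum of energies of probability measures supported by a
compact subset of `E`. -/
def greenV (E : Set ℂ) : ℝ≥0∞ :=
  ⨅ (μ : Measure ℂ) (_ : IsProbabilityMeasure μ)
    (_ : ∃ K : Set ℂ, K ⊆ E ∧ IsCompact K ∧ μ Kᶜ = 0), greenEnergy μ

/-- The Green capacity `capa(E) = 1/V(E)` of `E` in the unit disk. -/
def greenCapa (E : Set ℂ) : ℝ≥0∞ := (greenV E)⁻¹

/-- `e^{-1/capa(E)} = e^{-V(E)}`, with the value `0` when `V(E) = ∞` (i.e. `capa(E) = 0`). -/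
def expNegV (E : Set ℂ) : ℝ :=
  if greenV E = ⊤ then 0 else Real.exp (-(greenV E).toReal)

/-- The pseudo-hyperbolic distance on the unit disk. -/
def pseudoDist (z w : ℂ) : ℝ := ‖(z - w) / (1 - (starRingEnd ℂ) z * w)‖

/-- The pseudo-hyperbolic diameter of a set. -/
def pseudoDiam (E : Set ℂ) : ℝ :=
  sSup {d : ℝ | ∃ z ∈ E, ∃ w ∈ E, d = pseudoDist z w}

/-- The `n`-th approximation number `a_n(T) = inf {‖T - R‖ : rank R < n}`. -/
def approxNumber {E F : Type*} [NormedAddCommGroup E] [NormedAddCommGroup F]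
    [NormedSpace ℂ E] [NormedSpace ℂ F] (T : E →L[ℂ] F) (n : ℕ) : ℝ :=
  sInf {c : ℝ | ∃ R : E →L[ℂ] F,
    Module.rank ℂ (LinearMap.range (R : E →ₗ[ℂ] F)) < (n : Cardinal) ∧ c = ‖T - R‖}

/-- The squared norm `‖f‖² = |f(0)|² + ∫_D |f'|² ω dA` (normalized area measure) of the
weighted analytic Hilbert space `H_ω`. -/
def hwNormSq (ω : ℝ → ℝ) (f : ℂ → ℂ) : ℝ :=
  ‖f 0‖ ^ 2 + (∫ z in unitDisk, ‖deriv f z‖ ^ 2 * ω ‖z‖) / Real.pi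

/-- Membership in the weighted analytic Hilbert space `H_ω`. -/
def memHw (ω : ℝ → ℝ) (f : ℂ → ℂ) : Prop :=
  DifferentiableOn ℂ f unitDisk ∧
    IntegrableOn (fun z => ‖deriv f z‖ ^ 2 * ω ‖z‖) unitDisk

/-- The coefficient weights `w_0 = 1`, `w_n = 2 n² ∫_0^1 r^{2n-1} ω(r) dr`. -/
def wcoef (ω : ℝ → ℝ) (n : ℕ) : ℝ :=
  if n = 0 then 1 else 2 * (n : ℝ) ^ 2 * ∫ r in (0:ℝ)..1, r ^ (2 * n - 1) * ω r

/-- Taylor coefficient of `f` at `0`. -/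
def taylorCoeff (f : ℂ → ℂ) (n : ℕ) : ℂ := iteratedDeriv n f 0 / (n.factorial : ℂ)

/-- `(1/2π) ∫_0^{2π} |f(r e^{it})|^p dt`. -/
def hpMean (p : ℝ) (f : ℂ → ℂ) (r : ℝ) : ℝ :=
  (1 / (2 * Real.pi)) *
    ∫ t in (0:ℝ)..(2 * Real.pi), ‖f ((r : ℂ) * Complex.exp ((t : ℂ) * Complex.I))‖ ^ p

/-- The `H^p` norm. -/
def hpNorm (p : ℝ) (f : ℂ → ℂ) : ℝ :=
  sSup {m : ℝ | ∃ r ∈ Set.Ioo (0:ℝ) 1, m = hpMean p f r ^ (1 / p)}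

/-- Membership in the Hardy space `H^p`. -/
def memHp (p : ℝ) (f : ℂ → ℂ) : Prop :=
  DifferentiableOn ℂ f unitDisk ∧
    BddAbove {m : ℝ | ∃ r ∈ Set.Ioo (0:ℝ) 1, m = hpMean p f r ^ (1 / p)}

/-- The squared `H²` norm `‖f‖² = Σ |b_n|²` in terms of Taylor coefficients. -/
def h2NormSq (f : ℂ → ℂ) : ℝ := ∑' n : ℕ, ‖taylorCoeff f n‖ ^ 2

/-- Membership in the Hardy space `H²`. -/
def memH2 (f : ℂ → ℂ) : Prop :=
  DifferentiableOn ℂ f unitDisk ∧ Summable (fun n : ℕ => ‖taylorCoeff f n‖ ^ 2)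

/-- The `n`-th Kolmogorov number. -/
def kolmogorovNumber {E F : Type*} [NormedAddCommGroup E] [NormedAddCommGroup F]
    [NormedSpace ℂ E] [NormedSpace ℂ F] (T : E →L[ℂ] F) (n : ℕ) : ℝ :=
  ⨅ (S : Submodule ℂ F) (_ : Module.rank ℂ S < (n : Cardinal)),
    ⨆ x : {x : E // ‖x‖ ≤ 1}, Metric.infDist (T (x : E)) (S : Set F)

/-- The `n`-th Gelfand number: infimum of norms of restrictions of `T` to closed
subspaces of codimension `< n`. -/
def gelfandNumber {X : Type*} [NormedAddCommGroup X] [NormedSpace ℂ X]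
    (T : X →L[ℂ] X) (n : ℕ) : ℝ :=
  ⨅ (F : Submodule ℂ X) (_ : IsClosed (F : Set X))
    (_ : Module.rank ℂ (X ⧸ F) < (n : Cardinal)),
    ⨆ x : {x : X // x ∈ F ∧ ‖x‖ ≤ 1}, ‖T (x : X)‖

/-- `ε_n(T) = inf_{dim E < n} sup_{x ∈ B_X} dist (T x, T(E))`. -/
def epsApprox {X : Type*} [NormedAddCommGroup X] [NormedSpace ℂ X]
    (T : X →L[ℂ] X) (n : ℕ) : ℝ :=
  ⨅ (E : Submodule ℂ X) (_ : Module.rank ℂ E < (n : Cardinal)),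
    ⨆ x : {x : X // ‖x‖ ≤ 1}, Metric.infDist (T (x : X)) (T '' (E : Set X))

/-! ### Configurations with small potentials -/

/-- A real sequence `x m ∼ e m²` has, near every large `n`, an increment at most `2 n (e + ε)`. -/
theorem exists_small_increment (x : ℕ → ℝ) (e t : ℝ) (he : 0 ≤ e) (ht : e < t)
    (hx : Tendsto (fun m : ℕ => x m / (m : ℝ) ^ 2) atTop (nhds e)) :
    ∀ᶠ n : ℕ in atTop, ∃ m : ℕ, n ≤ m ∧ x (m + 1) - x m ≤ 2 * n * t := by
  -- `k = ⌈δ n⌉` further terms, with `δ` so small that `(2 + δ) e < 2 t`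
  obtain ⟨δ, hδ, hδe⟩ : ∃ δ : ℝ, 0 < δ ∧ (2 + δ) * e < 2 * t := by
    refine ⟨(t - e) / (e + 1), by have := sub_pos.2 ht; positivity, ?_⟩
    have h1 : (t - e) / (e + 1) * e ≤ t - e := by
      rw [div_mul_eq_mul_div, div_le_iff₀ (by positivity)]; nlinarith
    nlinarith
  set k : ℕ → ℕ := fun n => ⌈δ * n⌉₊ with hk
  have hkn : Tendsto (fun n : ℕ => (k n : ℝ) / n) atTop (nhds δ) :=
    (tendsto_nat_ceil_mul_div_atTop hδ.le).comp tendsto_natCast_atTop_atTop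
  have hsum : Tendsto (fun n : ℕ => n + k n) atTop atTop :=
    tendsto_atTop_mono (fun n => Nat.le_add_right _ _) tendsto_id
  have h1 := hx.comp hsum
  have h2 : Tendsto (fun n : ℕ => x (n + k n) / ((n + k n : ℕ) : ℝ) ^ 2 * (1 + (k n : ℝ) / n) ^ 2
      - x n / (n : ℝ) ^ 2 - (k n : ℝ) / n * (2 * t)) atTop
      (nhds (e * (1 + δ) ^ 2 - e - δ * (2 * t))) :=
    ((h1.mul ((hkn.const_add 1).pow 2)).sub hx).sub (hkn.mul_const _)
  have h3 : e * (1 + δ) ^ 2 - e - δ * (2 * t) < 0 := by nlinarith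
  filter_upwards [h2.eventually_lt_const h3, eventually_gt_atTop 0] with n hn hn0
  by_contra! hcon
  have hn0' : (0 : ℝ) < n := by exact_mod_cast hn0
  have h4 : ∀ j : ℕ, x n + j * (2 * n * t) ≤ x (n + j) := by
    intro j
    induction j with
    | zero => simp
    | succ j ih =>
      have := hcon (n + j) (Nat.le_add_right _ _)
      push_cast
      rw [← add_assoc]
      nlinarith
  have h5 := h4 (k n)
  have h6 : ((n : ℝ) + k n) ≠ 0 := by positivity
  have h7 : x (n + k n) / ((n + k n : ℕ) : ℝ) ^ 2 * (1 + (k n : ℝ) / n) ^ 2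
      - x n / (n : ℝ) ^ 2 - (k n : ℝ) / n * (2 * t)
      = (x (n + k n) - (x n + k n * (2 * n * t))) / (n : ℝ) ^ 2 := by
    push_cast
    field_simp
    ring
  rw [h7] at hn
  have : 0 ≤ (x (n + k n) - (x n + k n * (2 * n * t))) / (n : ℝ) ^ 2 :=
    div_nonneg (by linarith) (by positivity)
  linarith

/-- The discrete energy `∑_{a, b ∈ S} g a b` of a finite configuration, for kernels that vanish on
the diagonal. -/
def finEnergy {α : Type*} (g : α → α → ℝ) (S : Finset α) : ℝ := ∑ a ∈ S, ∑ b ∈ S, g a b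

/-- The infimum of the discrete energies of the `m`-point configurations in `K`. -/
def minEnergy {α : Type*} (g : α → α → ℝ) (K : Set α) (m : ℕ) : ℝ :=
  sInf (finEnergy g '' {S : Finset α | (S : Set α) ⊆ K ∧ S.card = m})

theorem finEnergy_erase {α : Type*} [DecidableEq α] {g : α → α → ℝ}
    (hsymm : ∀ a b, g a b = g b a) (hdiag : ∀ a, g a a = 0)
    {S : Finset α} {a : α} (ha : a ∈ S) :
    finEnergy g (S.erase a) = finEnergy g S - 2 * ∑ b ∈ S, g a b := by
  have h1 : ∀ f : α → ℝ, ∑ b ∈ S.erase a, f b = ∑ b ∈ S, f b - f a := fun f => by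
    rw [← Finset.add_sum_erase S f ha]; ring
  unfold finEnergy
  simp only [h1, Finset.sum_sub_distrib, hdiag]
  have : ∑ b ∈ S, g b a = ∑ b ∈ S, g a b := Finset.sum_congr rfl fun b _ => hsymm b a
  rw [this]; ring

theorem minEnergy_le {α : Type*} {g : α → α → ℝ}
    {K : Set α} (hnn : ∀ a ∈ K, ∀ b ∈ K, 0 ≤ g a b) {S : Finset α}
    (hS : (S : Set α) ⊆ K) : minEnergy g K S.card ≤ finEnergy g S := by
  refine csInf_le ⟨0, ?_⟩ ⟨S, ⟨hS, rfl⟩, rfl⟩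
  rintro _ ⟨T, ⟨hT, -⟩, rfl⟩
  exact Finset.sum_nonneg fun a ha => Finset.sum_nonneg fun b hb => hnn a (hT ha) b (hT hb)

/-- Fekete's monotonicity: averaging over the deletion of one point from an `(m+1)`-point
configuration. -/
theorem minEnergy_succ {α : Type*} [DecidableEq α] {g : α → α → ℝ}
    (hsymm : ∀ a b, g a b = g b a) (hdiag : ∀ a, g a a = 0)
    {K : Set α} (hnn : ∀ a ∈ K, ∀ b ∈ K, 0 ≤ g a b) {m : ℕ} (hm : 1 ≤ m)
    (hne : ∃ S : Finset α, (S : Set α) ⊆ K ∧ S.card = m + 1) :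
    (m + 1) * minEnergy g K m ≤ (m - 1) * minEnergy g K (m + 1) := by
  have key : ∀ S : Finset α, (S : Set α) ⊆ K → S.card = m + 1 →
      (m + 1) * minEnergy g K m ≤ (m - 1) * finEnergy g S := by
    intro S hS hc
    have h1 : ∑ a ∈ S, finEnergy g (S.erase a) = (m - 1) * finEnergy g S := by
      rw [Finset.sum_congr rfl fun a ha => finEnergy_erase hsymm hdiag ha,
        Finset.sum_sub_distrib, ← Finset.mul_sum, Finset.sum_const, hc]
      change _ - 2 * finEnergy g S = _
      rw [nsmul_eq_mul]; push_cast; ring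
    rw [← h1]
    calc ((m : ℝ) + 1) * minEnergy g K m = ∑ _a ∈ S, minEnergy g K m := by
          rw [Finset.sum_const, hc, nsmul_eq_mul]; push_cast; ring
      _ ≤ _ := Finset.sum_le_sum fun a ha => by
          have h2 : (S.erase a).card = m := by rw [Finset.card_erase_of_mem ha, hc]; rfl
          rw [← h2]
          exact minEnergy_le hnn fun b hb => hS (Finset.mem_of_mem_erase hb)
  obtain ⟨S₀, hS₀, hc₀⟩ := hne
  rcases hm.eq_or_lt with rfl | hm
  · have := key S₀ hS₀ hc₀
    simpa using this
  · have hm' : (0 : ℝ) < m - 1 := by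
      have : (1 : ℝ) < m := by exact_mod_cast hm
      linarith
    rw [← div_le_iff₀' hm']
    refine le_csInf ⟨_, S₀, ⟨hS₀, hc₀⟩, rfl⟩ ?_
    rintro _ ⟨S, ⟨hS, hc⟩, rfl⟩
    rw [div_le_iff₀' hm']
    exact key S hS hc

/-- If `K` carries `m`-point configurations of energy at most `m (m - 1) I` for all `m`, then for
each `t > I` and all large `n` it carries an `n`-point configuration in which *each* point has
potential at most `n t`. -/
theorem exists_config {α : Type*} [DecidableEq α] {g : α → α → ℝ}
    (hsymm : ∀ a b, g a b = g b a) (hdiag : ∀ a, g a a = 0)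
    {K : Set α} (hnn : ∀ a ∈ K, ∀ b ∈ K, 0 ≤ g a b) {I t : ℝ}
    (hI : ∀ m : ℕ, ∃ S : Finset α, (S : Set α) ⊆ K ∧ S.card = m ∧
      finEnergy g S ≤ m * (m - 1) * I) (ht : I < t) :
    ∀ᶠ n : ℕ in atTop, ∃ S : Finset α, (S : Set α) ⊆ K ∧ S.card = n ∧
      ∀ a ∈ S, ∑ b ∈ S, g a b ≤ n * t := by
  set x : ℕ → ℝ := minEnergy g K with hxdef
  have hx_nonneg : ∀ m, 0 ≤ x m := fun m => Real.sInf_nonneg <| by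
    rintro _ ⟨T, ⟨hT, -⟩, rfl⟩
    exact Finset.sum_nonneg fun a ha => Finset.sum_nonneg fun b hb => hnn a (hT ha) b (hT hb)
  have hx_le : ∀ m : ℕ, x m ≤ m * (m - 1) * I := fun m => by
    obtain ⟨S, hS, hc, hE⟩ := hI m
    have := minEnergy_le hnn hS
    rw [hc] at this
    exact this.trans hE
  -- the normalized minimal energies increase, hence converge to some `e ≤ I`
  set y : ℕ → ℝ := fun j => x (j + 2) / ((j + 2) * (j + 1)) with hy
  have hy_mono : Monotone y := monotone_nat_of_le_succ fun j => by
    obtain ⟨S, hS, hc, -⟩ := hI (j + 2 + 1)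
    have h := minEnergy_succ hsymm hdiag hnn (m := j + 2) (by omega) ⟨S, hS, hc⟩
    simp only [hy]
    rw [div_le_div_iff₀ (by positivity) (by positivity)]
    push_cast at h ⊢
    have h' : ((j : ℝ) + 3) * x (j + 2) ≤ (j + 1) * x (j + 1 + 2) := by
      have e1 : (j : ℝ) + 2 + 1 = j + 3 := by ring
      have e2 : (j : ℝ) + 2 - 1 = j + 1 := by ring
      rw [e1, e2] at h
      exact h
    have hj : (0 : ℝ) ≤ j + 2 := by positivity
    nlinarith [mul_le_mul_of_nonneg_left h' hj]
  have hy_le : ∀ j, y j ≤ I := fun j => by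
    have h := hx_le (j + 2)
    push_cast at h
    simp only [hy]
    rw [div_le_iff₀ (by positivity)]
    linarith
  have hbdd : BddAbove (range y) := ⟨I, by rintro _ ⟨j, rfl⟩; exact hy_le j⟩
  obtain ⟨e, he⟩ : ∃ e, e = ⨆ j, y j := ⟨_, rfl⟩
  have hy_tend : Tendsto y atTop (nhds e) := he ▸ tendsto_atTop_ciSup hy_mono hbdd
  have heI : e ≤ I := he ▸ ciSup_le hy_le
  have he0 : 0 ≤ e := ge_of_tendsto' hy_tend fun j => div_nonneg (hx_nonneg _) (by positivity)
  have hx_tend : Tendsto (fun m : ℕ => x m / (m : ℝ) ^ 2) atTop (nhds e) := by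
    rw [← tendsto_add_atTop_iff_nat 2]
    have h0 : Tendsto (fun j : ℕ => 1 - 1 / (((j + 2 : ℕ) : ℝ))) atTop (nhds (1 - 0)) :=
      ((tendsto_const_div_atTop_nhds_zero_nat (1 : ℝ)).comp (tendsto_add_atTop_nat 2)).const_sub 1
    have h1 := hy_tend.mul h0
    simp only [sub_zero, mul_one] at h1
    refine h1.congr fun j => ?_
    simp only [hy]
    push_cast
    have : (j : ℝ) + 2 ≠ 0 := by positivity
    have : (j : ℝ) + 1 ≠ 0 := by positivity
    field_simp
    ring
  obtain ⟨s, hs1, hs2⟩ := exists_between (heI.trans_lt ht)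
  have hlarge : ∀ᶠ n : ℕ in atTop, 1 ≤ (n : ℝ) * (t - s) :=
    (tendsto_natCast_atTop_atTop.atTop_mul_const (sub_pos.2 hs2)).eventually_ge_atTop 1
  filter_upwards [exists_small_increment x e s he0 hs1 hx_tend, hlarge] with n ⟨m, hnm, hm⟩ hn
  -- an almost optimal `(m+1)`-point configuration
  obtain ⟨S, hS, hc, -⟩ := hI (m + 1)
  obtain ⟨_, ⟨S', ⟨hS', hc'⟩, rfl⟩, hlt⟩ := exists_lt_of_csInf_lt
    (s := finEnergy g '' {S : Finset α | (S : Set α) ⊆ K ∧ S.card = m + 1}) ⟨_, S, ⟨hS, hc⟩, rfl⟩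
    (lt_add_one _ : _ < x (m + 1) + 1)
  obtain ⟨T, hT, hTc⟩ := Finset.exists_subset_card_eq (s := S') (n := n) (by omega)
  refine ⟨T, (Finset.coe_subset.2 hT).trans hS', hTc, fun a ha => ?_⟩
  have ha' := hT ha
  have h1 : x m ≤ finEnergy g (S'.erase a) := by
    have h2 : (S'.erase a).card = m := by rw [Finset.card_erase_of_mem ha', hc']; rfl
    have h3 := minEnergy_le hnn (S := S'.erase a)
      (fun b hb => hS' (Finset.mem_of_mem_erase hb))
    rwa [h2] at h3
  rw [finEnergy_erase hsymm hdiag ha'] at h1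
  have h4 : ∑ b ∈ T, g a b ≤ ∑ b ∈ S', g a b :=
    Finset.sum_le_sum_of_subset_of_nonneg hT fun b hb _ => hnn a (hS' ha') b (hS' hb)
  nlinarith

/-! ### The Green function and random configurations -/

/-- The real-valued Green function of the unit disk; division by zero and `Real.log 0 = 0` make it
vanish on the diagonal. -/
def grn (z w : ℂ) : ℝ := Real.log ‖(1 - (starRingEnd ℂ) w * z) / (z - w)‖

theorem grn_self (z : ℂ) : grn z z = 0 := by simp [grn]

theorem norm_one_sub_conj_mul_comm (z w : ℂ) :
    ‖1 - (starRingEnd ℂ) w * z‖ = ‖1 - (starRingEnd ℂ) z * w‖ := by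
  rw [← Complex.norm_conj (1 - (starRingEnd ℂ) w * z)]
  congr 1
  simp [mul_comm]

theorem grn_symm (z w : ℂ) : grn z w = grn w z := by
  unfold grn
  rw [norm_div, norm_div, norm_one_sub_conj_mul_comm, norm_sub_rev z w]

theorem norm_sub_le_norm_one_sub {z w : ℂ} (hz : ‖z‖ < 1) (hw : ‖w‖ < 1) :
    ‖z - w‖ ≤ ‖1 - (starRingEnd ℂ) w * z‖ := by
  rw [← sq_le_sq₀ (norm_nonneg _) (norm_nonneg _), ← Complex.normSq_eq_norm_sq,
    ← Complex.normSq_eq_norm_sq]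
  have hz' : Complex.normSq z < 1 := by
    rw [Complex.normSq_eq_norm_sq]; nlinarith [norm_nonneg z]
  have hw' : Complex.normSq w < 1 := by
    rw [Complex.normSq_eq_norm_sq]; nlinarith [norm_nonneg w]
  simp only [Complex.normSq_apply, Complex.sub_re, Complex.sub_im, Complex.mul_re, Complex.mul_im,
    Complex.conj_re, Complex.conj_im, Complex.one_re, Complex.one_im] at *
  nlinarith [mul_nonneg (sub_nonneg.2 hz'.le) (sub_nonneg.2 hw'.le)]

theorem one_sub_conj_mul_ne_zero {z w : ℂ} (hz : ‖z‖ < 1) (hw : ‖w‖ < 1) :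
    1 - (starRingEnd ℂ) w * z ≠ 0 := by
  intro h
  have h1 : ‖(starRingEnd ℂ) w * z‖ = 1 := by rw [← sub_eq_zero.1 h, norm_one]
  rw [norm_mul, Complex.norm_conj] at h1
  nlinarith [norm_nonneg z, norm_nonneg w]

theorem grn_nonneg {z w : ℂ} (hz : ‖z‖ < 1) (hw : ‖w‖ < 1) : 0 ≤ grn z w := by
  rcases eq_or_ne z w with rfl | h
  · rw [grn_self]
  · refine Real.log_nonneg ?_
    rw [norm_div, one_le_div (norm_pos_iff.2 (sub_ne_zero.2 h))]
    exact norm_sub_le_norm_one_sub hz hw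

theorem measurable_greenFnE : Measurable (fun p : ℂ × ℂ => greenFnE p.1 p.2) := by
  unfold greenFnE
  refine Measurable.ite (measurableSet_eq_fun measurable_fst measurable_snd) measurable_const ?_
  refine ENNReal.measurable_ofReal.comp (Real.measurable_log.comp ?_)
  have h : Measurable (fun p : ℂ × ℂ => (starRingEnd ℂ) p.2) :=
    Complex.continuous_conj.measurable.comp measurable_snd
  exact (((h.mul measurable_fst).const_sub 1).div (measurable_fst.sub measurable_snd)).norm

/-- Under the power measure `μ^m`, the expected interaction of two distinct coordinates is the
Green energy of `μ`. -/
theorem lintegral_pi_green (μ : Measure ℂ) [IsProbabilityMeasure μ] {m : ℕ} {i j : Fin m}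
    (hij : i ≠ j) :
    ∫⁻ x, greenFnE (x i) (x j) ∂(Measure.pi fun _ : Fin m => μ) = greenEnergy μ := by
  set P := Measure.pi fun _ : Fin m => μ
  have hind : ProbabilityTheory.iIndepFun (fun (i : Fin m) (x : Fin m → ℂ) => x i) P :=
    ProbabilityTheory.iIndepFun_pi (X := fun _ => id) fun _ => aemeasurable_id
  have h2 := (hind.indepFun hij).map_prod_eq_prod_map_map (measurable_pi_apply i).aemeasurable
    (measurable_pi_apply j).aemeasurable
  have hm : ∀ k : Fin m, P.map (fun x : Fin m → ℂ => x k) = μ := fun k =>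
    (measurePreserving_eval (fun _ : Fin m => μ) k).map_eq
  rw [hm, hm] at h2
  have h3 := lintegral_map (μ := P) measurable_greenFnE
    ((measurable_pi_apply i).prodMk (measurable_pi_apply j))
  rw [h2] at h3
  rw [← h3, lintegral_prod _ measurable_greenFnE.aemeasurable]
  rfl

/-- A measure of finite Green energy on `K` yields `m`-point configurations in `K` whose discrete
energy is at most `m (m - 1) I(μ)`: some sample does not exceed the mean. -/
theorem exists_finEnergy_le (μ : Measure ℂ) [IsProbabilityMeasure μ] {K : Set ℂ}
    (hK : ∀ z ∈ K, ‖z‖ < 1) (hμ : μ Kᶜ = 0) (hI : greenEnergy μ ≠ ⊤) (m : ℕ) :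
    ∃ S : Finset ℂ, (S : Set ℂ) ⊆ K ∧ S.card = m ∧
      finEnergy grn S ≤ m * (m - 1) * (greenEnergy μ).toReal := by
  classical
  set P := Measure.pi fun _ : Fin m => μ
  set F : (Fin m → ℂ) → ℝ≥0∞ := fun x =>
    ∑ i, ∑ j ∈ Finset.univ.erase i, greenFnE (x i) (x j) with hF
  have hmeas : ∀ i j : Fin m, Measurable fun x : Fin m → ℂ => greenFnE (x i) (x j) := fun i j => by
    have h : Measurable fun x : Fin m → ℂ => (x i, x j) :=
      (measurable_pi_apply i).prodMk (measurable_pi_apply j)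
    exact measurable_greenFnE.comp h
  have hFmeas : Measurable F :=
    Finset.measurable_fun_sum _ fun i _ => Finset.measurable_fun_sum _ fun j _ => hmeas i j
  have hFint : ∫⁻ x, F x ∂P = ∑ i : Fin m, ∑ j ∈ Finset.univ.erase i, greenEnergy μ := by
    simp only [hF]
    rw [lintegral_finsetSum _ fun i _ => Finset.measurable_fun_sum _ fun j _ => hmeas i j]
    refine Finset.sum_congr rfl fun i _ => ?_
    rw [lintegral_finsetSum _ fun j _ => hmeas i j]
    exact Finset.sum_congr rfl fun j hj => lintegral_pi_green μ (Finset.ne_of_mem_erase hj).symm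
  have hFtop : ∫⁻ x, F x ∂P ≠ ⊤ := by
    rw [hFint]
    exact ENNReal.sum_ne_top.2 fun i _ => ENNReal.sum_ne_top.2 fun j _ => hI
  have hnull : P {x | ∃ i, x i ∈ Kᶜ} = 0 := by
    have : {x : Fin m → ℂ | ∃ i, x i ∈ Kᶜ} = ⋃ i, (fun x : Fin m → ℂ => x i) ⁻¹' Kᶜ := by
      ext x; simp
    rw [this]
    refine measure_iUnion_null fun i => ?_
    exact (measurePreserving_eval (fun _ : Fin m => μ) i).quasiMeasurePreserving.preimage_null hμ
  obtain ⟨x, hxK, hx⟩ := exists_notMem_null_le_lintegral (μ := P) (f := F)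
    hFmeas.aemeasurable hnull
  have hxK' : ∀ i, x i ∈ K := by simpa using hxK
  have hxtop : F x ≠ ⊤ := (hx.trans_lt hFtop.lt_top).ne
  have hne : ∀ i, ∀ j ∈ Finset.univ.erase i, greenFnE (x i) (x j) ≠ ⊤ := fun i j hj =>
    ENNReal.sum_ne_top.1 (ENNReal.sum_ne_top.1 hxtop i (Finset.mem_univ i)) j hj
  have hinj : Function.Injective x := by
    intro i j hij
    by_contra h
    exact hne i j (Finset.mem_erase.2 ⟨fun e => h e.symm, Finset.mem_univ _⟩)
      (by simp [greenFnE, hij])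
  have hgr : ∀ i, ∀ j ∈ Finset.univ.erase i,
      (greenFnE (x i) (x j)).toReal = grn (x i) (x j) := fun i j hj => by
    have : x i ≠ x j := fun h => (Finset.ne_of_mem_erase hj) (hinj h).symm
    rw [greenFnE, if_neg this]
    exact ENNReal.toReal_ofReal (grn_nonneg (hK _ (hxK' i)) (hK _ (hxK' j)))
  refine ⟨Finset.univ.image x, ?_, ?_, ?_⟩
  · intro z hz
    simp only [Finset.coe_image, Finset.coe_univ, image_univ, mem_range] at hz
    obtain ⟨i, rfl⟩ := hz
    exact hxK' i
  · rw [Finset.card_image_of_injective _ hinj, Finset.card_univ, Fintype.card_fin]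
  · have h1 : finEnergy grn (Finset.univ.image x) = (F x).toReal := by
      unfold finEnergy
      simp only [Finset.sum_image hinj.injOn, hF]
      rw [ENNReal.toReal_sum fun i _ => ENNReal.sum_ne_top.2 (hne i)]
      refine Finset.sum_congr rfl fun i _ => ?_
      rw [ENNReal.toReal_sum (hne i), Finset.sum_congr rfl (hgr i),
        ← Finset.add_sum_erase _ _ (Finset.mem_univ i), grn_self, zero_add]
    rw [h1]
    refine (ENNReal.toReal_mono hFtop hx).trans (le_of_eq ?_)
    rw [hFint]
    simp only [Finset.sum_const, Finset.card_univ, Fintype.card_fin,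
      Finset.card_erase_of_mem (Finset.mem_univ _), nsmul_eq_mul, ENNReal.toReal_mul,
      ENNReal.toReal_natCast]
    rcases Nat.eq_zero_or_pos m with rfl | hm
    · simp
    · rw [Nat.cast_sub hm]; push_cast; ring

/-! ### Evaluations and norms in the weighted space -/

theorem unitDisk_eq_ball : unitDisk = Metric.ball (0 : ℂ) 1 := by
  ext z; simp [unitDisk]

theorem isOpen_unitDisk : IsOpen unitDisk := unitDisk_eq_ball ▸ Metric.isOpen_ball

/-- Mean value inequality over a circle, with the angle in the range used by polar coordinates. -/
theorem two_pi_mul_le_lintegral_circle {F : ℂ → ℂ} {u : ℂ} {s : ℝ} (hs : 0 < s)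
    (hF : DifferentiableOn ℂ F (Metric.closedBall u s)) :
    ENNReal.ofReal (2 * Real.pi) * ‖F u‖ₑ ^ 2 ≤
      ∫⁻ θ in Ioo (-Real.pi) Real.pi, ‖F (circleMap u s θ)‖ₑ ^ 2 := by
  have h1 : DiffContOnCl ℂ (fun z => F z ^ 2) (Metric.ball u |s|) := by
    rw [abs_of_pos hs]
    exact (hF.pow 2).diffContOnCl_ball subset_rfl
  have h2 := h1.circleAverage
  rw [Real.circleAverage_eq_integral_add (-Real.pi),
    intervalIntegral.integral_comp_add_right (fun θ => F (circleMap u s θ) ^ 2),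
    zero_add, show 2 * Real.pi + -Real.pi = Real.pi by ring,
    intervalIntegral.integral_of_le (by linarith [Real.pi_pos]), integral_Ioc_eq_integral_Ioo] at h2
  have h3 : (2 * Real.pi) • F u ^ 2 =
      ∫ θ in Ioo (-Real.pi) Real.pi, F (circleMap u s θ) ^ 2 := by
    rw [← h2, smul_smul, mul_inv_cancel₀ (by positivity), one_smul]
  calc ENNReal.ofReal (2 * Real.pi) * ‖F u‖ₑ ^ 2 = ‖(2 * Real.pi) • F u ^ 2‖ₑ := by
        rw [enorm_smul, enorm_pow, Real.enorm_eq_ofReal (by positivity)]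
    _ ≤ _ := by
        rw [h3]
        refine (enorm_integral_le_lintegral_enorm _).trans (le_of_eq ?_)
        simp only [enorm_pow]

/-- Mean value inequality over a disk: `π δ² |F(u)|² ≤ ∫_{B(u, δ)} |F|²`. -/
theorem area_mul_le_lintegral_ball {F : ℂ → ℂ} (hFm : Measurable F) {u : ℂ} {δ : ℝ} (hδ : 0 < δ)
    (hF : DifferentiableOn ℂ F (Metric.ball u δ)) :
    ENNReal.ofReal (Real.pi * δ ^ 2) * ‖F u‖ₑ ^ 2 ≤ ∫⁻ z in Metric.ball u δ, ‖F z‖ₑ ^ 2 := by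
  set G : ℂ → ℝ≥0∞ := (Metric.ball u δ).indicator fun z => ‖F z‖ₑ ^ 2 with hG
  have hGm : Measurable G := (hFm.enorm.pow_const 2).indicator measurableSet_ball
  have e1 : ∫⁻ z in Metric.ball u δ, ‖F z‖ₑ ^ 2 =
      ∫⁻ r in Ioi (0 : ℝ), ∫⁻ θ in Ioo (-Real.pi) Real.pi,
        ENNReal.ofReal r * G (circleMap u r θ) := by
    rw [← lintegral_indicator measurableSet_ball, ← lintegral_add_left_eq_self _ u,
      ← Complex.lintegral_comp_polarCoord_symm, polarCoord_target, Measure.volume_eq_prod,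
      setLIntegral_prod]
    · simp only [Complex.polarCoord_symm_apply, circleMap, Complex.exp_mul_I, smul_eq_mul, hG,
        Complex.ofReal_cos, Complex.ofReal_sin]
    · refine Measurable.aemeasurable ?_
      simp only [Complex.polarCoord_symm_apply, smul_eq_mul]
      refine (ENNReal.measurable_ofReal.comp measurable_fst).mul (hGm.comp ?_)
      fun_prop
  rw [e1]
  have hsub : Ioo (0 : ℝ) δ ⊆ Ioi 0 := fun r hr => hr.1
  have hid : ∫⁻ r in Ioo (0 : ℝ) δ, ENNReal.ofReal r = ENNReal.ofReal (δ ^ 2 / 2) := by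
    rw [← ofReal_integral_eq_lintegral_ofReal]
    · rw [← integral_Ioc_eq_integral_Ioo, ← intervalIntegral.integral_of_le hδ.le, integral_id]
      simp
    · exact (continuous_id.integrableOn_Icc (a := 0) (b := δ)).mono_set Ioo_subset_Icc_self
    · exact (ae_restrict_mem measurableSet_Ioo).mono fun r hr => hr.1.le
  calc ENNReal.ofReal (Real.pi * δ ^ 2) * ‖F u‖ₑ ^ 2
      = ∫⁻ r in Ioo (0 : ℝ) δ, ENNReal.ofReal r * (ENNReal.ofReal (2 * Real.pi) * ‖F u‖ₑ ^ 2) := by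
        rw [lintegral_mul_const _ ENNReal.measurable_ofReal, hid, ← mul_assoc,
          ← ENNReal.ofReal_mul (by positivity)]
        congr 2; ring
    _ ≤ ∫⁻ r in Ioo (0 : ℝ) δ, ∫⁻ θ in Ioo (-Real.pi) Real.pi,
        ENNReal.ofReal r * G (circleMap u r θ) := by
        refine setLIntegral_mono' measurableSet_Ioo fun r hr => ?_
        have hcb : Metric.closedBall u r ⊆ Metric.ball u δ := Metric.closedBall_subset_ball hr.2
        have hGc : Measurable fun θ : ℝ => G (circleMap u r θ) :=
          hGm.comp (continuous_circleMap u r).measurable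
        rw [lintegral_const_mul _ hGc]
        gcongr
        refine (two_pi_mul_le_lintegral_circle hr.1 (hF.mono hcb)).trans (le_of_eq ?_)
        refine lintegral_congr fun θ => ?_
        rw [hG, indicator_of_mem (hcb (circleMap_mem_closedBall u hr.1.le θ))]
    _ ≤ _ := lintegral_mono_set hsub

/-- Point evaluations are bounded on `H_ω`, uniformly on compact subsets of the disk. -/
theorem exists_eval_bound {ω : ℝ → ℝ} (hω_cont : ContinuousOn ω (Ico 0 1))
    (hω_pos : ∀ r ∈ Ico (0:ℝ) 1, 0 < ω r) {r : ℝ} (hr0 : 0 ≤ r) (hr1 : r < 1) :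
    ∃ D : ℝ, 0 < D ∧ ∀ f : ℂ → ℂ, memHw ω f → ∀ u : ℂ, ‖u‖ ≤ r →
      ‖f u‖ ≤ D * Real.sqrt (hwNormSq ω f) := by
  set δ : ℝ := (1 - r) / 2 with hδdef
  have hδ : 0 < δ := by rw [hδdef]; linarith
  have hIcc : Icc 0 (r + δ) ⊆ Ico (0 : ℝ) 1 := fun x hx => ⟨hx.1, by
    have := hx.2; rw [hδdef] at this; linarith⟩
  obtain ⟨x₀, hx₀, hmin⟩ := isCompact_Icc.exists_isMinOn (f := ω)
    (nonempty_Icc.2 (by linarith : (0 : ℝ) ≤ r + δ)) (hω_cont.mono hIcc)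
  obtain ⟨m, hm⟩ : ∃ m, m = ω x₀ := ⟨_, rfl⟩
  have hm0 : 0 < m := hm ▸ hω_pos _ (hIcc hx₀)
  refine ⟨1 + 1 / (δ * Real.sqrt m), by positivity, fun f hf u hu => ?_⟩
  obtain ⟨hfd, hfi⟩ := hf
  set J := ∫ z in unitDisk, ‖deriv f z‖ ^ 2 * ω ‖z‖ with hJ
  have hnn : ∀ z ∈ unitDisk, 0 ≤ ‖deriv f z‖ ^ 2 * ω ‖z‖ := fun z hz =>
    mul_nonneg (by positivity) (hω_pos _ ⟨norm_nonneg z, hz⟩).le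
  have hJ0 : 0 ≤ J := setIntegral_nonneg isOpen_unitDisk.measurableSet hnn
  have hN : hwNormSq ω f = ‖f 0‖ ^ 2 + J / Real.pi := rfl
  set N := hwNormSq ω f
  have hJN : J ≤ Real.pi * N := by
    rw [hN, mul_add, mul_div_cancel₀ _ Real.pi_ne_zero]
    have : 0 ≤ Real.pi * ‖f 0‖ ^ 2 := by positivity
    linarith
  have hN0 : 0 ≤ N := by rw [hN]; positivity
  have hf0 : ‖f 0‖ ≤ Real.sqrt N := Real.le_sqrt_of_sq_le (by
    rw [hN]; exact le_add_of_nonneg_right (by positivity))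
  -- bound for the derivative by the mean value inequality on `B(v, δ)`
  have hder : ∀ v ∈ Metric.closedBall (0 : ℂ) r,
      ‖deriv f v‖ ≤ 1 / (δ * Real.sqrt m) * Real.sqrt N := by
    intro v hv
    rw [mem_closedBall_zero_iff] at hv
    have hball : ∀ z ∈ Metric.ball v δ, ‖z‖ ∈ Icc 0 (r + δ) := fun z hz => ⟨norm_nonneg z, by
      have h1 := norm_le_norm_add_norm_sub' z v
      have h2 := mem_ball_iff_norm.1 hz
      linarith⟩
    have hballD : Metric.ball v δ ⊆ unitDisk := fun z hz => (hIcc (hball z hz)).2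
    have h1 := area_mul_le_lintegral_ball (measurable_deriv f) hδ
      ((hfd.deriv isOpen_unitDisk).mono hballD)
    have h2 : ∫⁻ z in Metric.ball v δ, ‖deriv f z‖ₑ ^ 2 ≤ ENNReal.ofReal (J / m) := by
      calc ∫⁻ z in Metric.ball v δ, ‖deriv f z‖ₑ ^ 2
          ≤ ∫⁻ z in Metric.ball v δ, ENNReal.ofReal (‖deriv f z‖ ^ 2 * ω ‖z‖ / m) := by
            refine setLIntegral_mono' measurableSet_ball fun z hz => ?_
            rw [← ofReal_norm, ← ENNReal.ofReal_pow (norm_nonneg _)]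
            refine ENNReal.ofReal_le_ofReal ?_
            rw [le_div_iff₀ hm0]
            have : m ≤ ω ‖z‖ := hm ▸ hmin (hball z hz)
            gcongr
        _ ≤ ∫⁻ z in unitDisk, ENNReal.ofReal (‖deriv f z‖ ^ 2 * ω ‖z‖ / m) :=
            lintegral_mono_set hballD
        _ = ENNReal.ofReal (J / m) := by
            rw [← ofReal_integral_eq_lintegral_ofReal (hfi.div_const m), integral_div]
            exact (ae_restrict_mem isOpen_unitDisk.measurableSet).mono fun z hz =>
              div_nonneg (hnn z hz) hm0.le
    have h3 := h1.trans h2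
    rw [← ofReal_norm, ← ENNReal.ofReal_pow (norm_nonneg _),
      ← ENNReal.ofReal_mul (by positivity), ENNReal.ofReal_le_ofReal_iff (by positivity)] at h3
    have h4 : Real.pi * δ ^ 2 * ‖deriv f v‖ ^ 2 ≤ Real.pi * (N / m) := by
      refine h3.trans ?_
      rw [← mul_div_assoc]
      gcongr
    rw [mul_assoc, mul_le_mul_iff_right₀ Real.pi_pos, le_div_iff₀ hm0] at h4
    rw [div_mul_eq_mul_div, one_mul, le_div_iff₀ (by positivity)]
    refine Real.le_sqrt_of_sq_le ?_
    rw [mul_pow, mul_pow, Real.sq_sqrt hm0.le]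
    linarith
  have hmv := (convex_closedBall (0 : ℂ) r).norm_image_sub_le_of_norm_deriv_le
    (f := f) (x := 0) (y := u) (fun v hv => (hfd v (by
      rw [mem_closedBall_zero_iff] at hv; exact hv.trans_lt hr1)).differentiableAt
        (isOpen_unitDisk.mem_nhds (by
      rw [mem_closedBall_zero_iff] at hv; exact hv.trans_lt hr1))) hder
    (by simpa using hr0) (by simpa using hu)
  rw [sub_zero] at hmv
  have h5 : ‖f u‖ ≤ ‖f 0‖ + ‖f u - f 0‖ := norm_le_norm_add_norm_sub' _ _
  have h6 : 1 / (δ * Real.sqrt m) * Real.sqrt N * ‖u‖ ≤ 1 / (δ * Real.sqrt m) * Real.sqrt N :=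
    mul_le_of_le_one_right (by positivity) (hu.trans hr1.le)
  linarith

theorem integrableOn_radial {ω : ℝ → ℝ} (hω_int : IntegrableOn ω (Ico 0 1)) :
    IntegrableOn (fun z : ℂ => ω ‖z‖) unitDisk := by
  have h1 : IntegrableOn (fun y : ℝ => y * ω y) (Ioo 0 1) := by
    refine Integrable.bdd_mul (c := 1) (hω_int.mono_set Ioo_subset_Ico_self)
      measurable_id.aestronglyMeasurable ?_
    exact (ae_restrict_mem measurableSet_Ioo).mono fun y hy => by
      exact (Real.norm_of_nonneg hy.1.le).trans_le hy.2.le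
  have h2 : Integrable (fun z : ℂ => (Iio (1 : ℝ)).indicator ω ‖z‖) := by
    rw [integrable_fun_norm_addHaar (volume : Measure ℂ)]
    have h3 : (fun y : ℝ => y ^ (Module.finrank ℝ ℂ - 1) • (Iio (1 : ℝ)).indicator ω y) =
        (Iio (1 : ℝ)).indicator fun y => y * ω y := by
      ext y
      rw [Complex.finrank_real_complex]
      by_cases hy : y ∈ Iio (1 : ℝ) <;> simp [hy, indicator]
    rw [h3, IntegrableOn, integrable_indicator_iff measurableSet_Iio, IntegrableOn,
      Measure.restrict_restrict measurableSet_Iio, inter_comm, Ioi_inter_Iio]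
    exact h1
  rw [← integrable_indicator_iff isOpen_unitDisk.measurableSet]
  refine h2.congr (Eventually.of_forall fun z => ?_)
  by_cases hz : ‖z‖ < 1 <;> simp [hz, indicator, unitDisk]

/-- A function with `|f| ≤ 1` and `|f'| ≤ A` in the disk has `‖f‖² ≤ 1 + A² ∫ ω dA`. -/
theorem memHw_of_bounded {ω : ℝ → ℝ} (hω_pos : ∀ r ∈ Ico (0:ℝ) 1, 0 < ω r)
    (hω_int : IntegrableOn ω (Ico 0 1)) {f : ℂ → ℂ} {A : ℝ}
    (hfd : DifferentiableOn ℂ f unitDisk) (hf : ∀ z ∈ unitDisk, ‖f z‖ ≤ 1)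
    (hf' : ∀ z ∈ unitDisk, ‖deriv f z‖ ≤ A) :
    memHw ω f ∧ hwNormSq ω f ≤ 1 + A ^ 2 * ((∫ z in unitDisk, ω ‖z‖) / Real.pi) := by
  have hmeas := isOpen_unitDisk.measurableSet
  have hrad := integrableOn_radial hω_int
  have hint : IntegrableOn (fun z => ‖deriv f z‖ ^ 2 * ω ‖z‖) unitDisk := by
    refine Integrable.bdd_mul (c := A ^ 2) hrad
      ((measurable_deriv f).norm.pow_const 2).aestronglyMeasurable ?_
    refine (ae_restrict_mem hmeas).mono fun z hz => ?_
    rw [Real.norm_of_nonneg (by positivity)]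
    have := hf' z hz
    gcongr
  refine ⟨⟨hfd, hint⟩, ?_⟩
  unfold hwNormSq
  have h0 : ‖f 0‖ ^ 2 ≤ 1 := pow_le_one₀ (norm_nonneg _) (hf 0 (by simp [unitDisk]))
  rw [← mul_div_assoc, ← integral_const_mul]
  refine add_le_add h0 (div_le_div_of_nonneg_right ?_ Real.pi_pos.le)
  refine setIntegral_mono_on hint (hrad.const_mul _) hmeas fun z hz => ?_
  have h1 := hf' z hz
  have h2 := (hω_pos ‖z‖ ⟨norm_nonneg z, hz⟩).le
  gcongr

/-! ### Blaschke products -/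

/-- A finite product of disk automorphisms: the Blaschke product with zero set `S`. -/
def blaschke (S : Finset ℂ) (z : ℂ) : ℂ := ∏ b ∈ S, (z - b) / (1 - (starRingEnd ℂ) b * z)

theorem mobius_bounds {ρ : ℝ} (hρ : ρ < 1) {b z : ℂ} (hb : ‖b‖ ≤ ρ) (hz : ‖z‖ < 1) :
    ∃ d : ℂ, HasDerivAt (fun z : ℂ => (z - b) / (1 - (starRingEnd ℂ) b * z)) d z ∧
      ‖(z - b) / (1 - (starRingEnd ℂ) b * z)‖ ≤ 1 ∧ ‖d‖ ≤ 1 / (1 - ρ) ^ 2 := by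
  have hb1 : ‖b‖ < 1 := hb.trans_lt hρ
  have hne := one_sub_conj_mul_ne_zero hz hb1
  have hden : 1 - ρ ≤ ‖1 - (starRingEnd ℂ) b * z‖ := by
    have h1 := norm_sub_norm_le (1 : ℂ) ((starRingEnd ℂ) b * z)
    rw [norm_mul, Complex.norm_conj, norm_one] at h1
    nlinarith [norm_nonneg b, norm_nonneg z]
  have h1 : HasDerivAt (fun z : ℂ => z - b) 1 z := (hasDerivAt_id z).sub_const b
  have h2 : HasDerivAt (fun z : ℂ => 1 - (starRingEnd ℂ) b * z) (-(starRingEnd ℂ) b) z := by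
    simpa using ((hasDerivAt_id z).const_mul ((starRingEnd ℂ) b)).const_sub 1
  refine ⟨_, h1.div h2 hne, ?_, ?_⟩
  · rw [norm_div, div_le_one (norm_pos_iff.2 hne)]
    exact norm_sub_le_norm_one_sub hz hb1
  · have h3 : 1 * (1 - (starRingEnd ℂ) b * z) - (z - b) * -(starRingEnd ℂ) b
        = ((1 - ‖b‖ ^ 2 : ℝ) : ℂ) := by
      push_cast
      rw [← Complex.conj_mul']
      ring
    rw [h3, norm_div, Complex.norm_real, Real.norm_of_nonneg (by nlinarith [norm_nonneg b]),
      norm_pow]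
    have : 0 < 1 - ρ := by linarith
    gcongr
    nlinarith [norm_nonneg b]

/-- The derivative of a Blaschke product grows at most linearly with the number of its factors. -/
theorem blaschke_bounds {ρ : ℝ} (hρ : ρ < 1) {z : ℂ} (hz : ‖z‖ < 1) (S : Finset ℂ)
    (hS : ∀ b ∈ S, ‖b‖ ≤ ρ) :
    ∃ d : ℂ, HasDerivAt (blaschke S) d z ∧ ‖blaschke S z‖ ≤ 1 ∧
      ‖d‖ ≤ S.card * (1 / (1 - ρ) ^ 2) := by
  classical
  induction S using Finset.induction_on with
  | empty =>
    refine ⟨0, ?_, by simp [blaschke], by simp⟩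
    have : blaschke ∅ = fun _ => 1 := by ext; simp [blaschke]
    rw [this]
    exact hasDerivAt_const z 1
  | insert b S hbS ih =>
    obtain ⟨d, hd, hn, hdn⟩ := ih fun c hc => hS c (Finset.mem_insert_of_mem hc)
    obtain ⟨e, he, hm, hen⟩ := mobius_bounds hρ (hS b (Finset.mem_insert_self b S)) hz
    have heq : blaschke (insert b S) =
        fun z => (z - b) / (1 - (starRingEnd ℂ) b * z) * blaschke S z := by
      ext z; simp [blaschke, Finset.prod_insert hbS]
    rw [heq]
    refine ⟨_, he.mul hd, ?_, ?_⟩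
    · rw [norm_mul]
      exact mul_le_one₀ hm (norm_nonneg _) hn
    · refine (norm_add_le _ _).trans ?_
      rw [norm_mul, norm_mul, Finset.card_insert_of_notMem hbS]
      have h1 : ‖e‖ * ‖blaschke S z‖ ≤ 1 / (1 - ρ) ^ 2 * 1 := by gcongr
      have h2 := mul_le_mul hm hdn (norm_nonneg _) zero_le_one
      push_cast
      linarith

theorem blaschke_eq_zero {S : Finset ℂ} {b : ℂ} (hb : b ∈ S) : blaschke S b = 0 :=
  Finset.prod_eq_zero hb (by simp)

theorem norm_blaschke_erase {S : Finset ℂ} (hS : ∀ b ∈ S, ‖b‖ < 1) {a : ℂ} (ha : a ∈ S) :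
    ‖blaschke (S.erase a) a‖ = Real.exp (-∑ b ∈ S, grn a b) := by
  rw [← Finset.add_sum_erase S _ ha, grn_self, zero_add, ← Finset.sum_neg_distrib, Real.exp_sum,
    blaschke, norm_prod]
  refine Finset.prod_congr rfl fun b hb => ?_
  have h1 : a - b ≠ 0 := sub_ne_zero.2 (Finset.ne_of_mem_erase hb).symm
  have h2 := one_sub_conj_mul_ne_zero (hS a ha) (hS b (Finset.mem_of_mem_erase hb))
  rw [grn, ← Real.log_inv, Real.exp_log (inv_pos.2 (norm_pos_iff.2 (div_ne_zero h2 h1))),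
    ← norm_inv, inv_div]

/-! ### Approximation numbers -/

theorem approxNumber_nonneg {E F : Type} [NormedAddCommGroup E] [NormedAddCommGroup F]
    [NormedSpace ℂ E] [NormedSpace ℂ F] (T : E →L[ℂ] F) (n : ℕ) : 0 ≤ approxNumber T n :=
  Real.sInf_nonneg <| by rintro _ ⟨R, -, rfl⟩; exact norm_nonneg _

theorem rank_range_zero_lt {E F : Type} [NormedAddCommGroup E] [NormedAddCommGroup F]
    [NormedSpace ℂ E] [NormedSpace ℂ F] {n : ℕ} (hn : 0 < n) :
    Module.rank ℂ (LinearMap.range ((0 : E →L[ℂ] F) : E →ₗ[ℂ] F)) < (n : Cardinal) := by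
  rw [ContinuousLinearMap.toLinearMap_zero, LinearMap.range_zero, rank_bot]
  exact_mod_cast hn

theorem approxNumber_le_norm {E F : Type} [NormedAddCommGroup E] [NormedAddCommGroup F]
    [NormedSpace ℂ E] [NormedSpace ℂ F] (T : E →L[ℂ] F) {n : ℕ} (hn : 0 < n) :
    approxNumber T n ≤ ‖T‖ :=
  csInf_le ⟨0, by rintro _ ⟨R, -, rfl⟩; exact norm_nonneg _⟩
    ⟨0, rank_range_zero_lt hn, by rw [sub_zero]⟩

/-- Lower bound for approximation numbers by biorthogonality: if functionals `Λ i` of norm at most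
`D` are biorthogonal to the images `T (L i)` of `n` vectors of norm at most `M`, then
`a_n(T) ≥ 1 / (D n M)`. An operator of rank `< n` kills some nonzero `∑ c_i L_i`, and the functional
at the largest coefficient detects its image under `T`. -/
theorem le_approxNumber {E F κ : Type} [NormedAddCommGroup E] [NormedAddCommGroup F]
    [NormedSpace ℂ E] [NormedSpace ℂ F] [Fintype κ] [DecidableEq κ] (T : E →L[ℂ] F) {n : ℕ}
    (hn : 0 < n) (hκ : Fintype.card κ = n) (L : κ → E) (Λ : κ → F →ₗ[ℂ] ℂ) {D M : ℝ}
    (hD : 0 < D) (hM : 0 < M) (hL : ∀ i, ‖L i‖ ≤ M) (hΛ : ∀ i y, ‖Λ i y‖ ≤ D * ‖y‖)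
    (hΛL : ∀ i j, Λ i (T (L j)) = if i = j then 1 else 0) :
    1 / (D * (n * M)) ≤ approxNumber T n := by
  refine le_csInf ⟨_, 0, rank_range_zero_lt hn, rfl⟩ ?_
  rintro _ ⟨R, hR, rfl⟩
  set A : (κ → ℂ) →ₗ[ℂ] E := Fintype.linearCombination ℂ L with hA
  obtain ⟨c, hc, hc0⟩ : ∃ c : κ → ℂ, R (A c) = 0 ∧ c ≠ 0 := by
    by_contra! hcon
    set f := (R : E →ₗ[ℂ] F).rangeRestrict ∘ₗ A with hf
    have hinj : Function.Injective f := by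
      rw [← LinearMap.ker_eq_bot, LinearMap.ker_eq_bot']
      intro c hc
      exact hcon c (congrArg Subtype.val hc)
    have := LinearMap.rank_le_of_injective f hinj
    rw [rank_fun', hκ] at this
    exact absurd hR (not_lt.2 this)
  have hne : Nonempty κ := Fintype.card_pos_iff.1 (hκ ▸ hn)
  obtain ⟨i₀, -, hi₀⟩ := Finset.exists_max_image Finset.univ (fun i => ‖c i‖) Finset.univ_nonempty
  have hpos : 0 < ‖c i₀‖ := by
    obtain ⟨j, hj⟩ := Function.ne_iff.1 hc0
    exact (norm_pos_iff.2 hj).trans_le (hi₀ j (Finset.mem_univ j))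
  have h1 : ‖A c‖ ≤ n * (‖c i₀‖ * M) := by
    rw [hA, Fintype.linearCombination_apply]
    calc ‖∑ i, c i • L i‖ ≤ ∑ i : κ, ‖c i₀‖ * M := by
          refine norm_sum_le_of_le _ fun i hi => ?_
          rw [norm_smul]
          exact mul_le_mul (hi₀ i hi) (hL i) (norm_nonneg _) (norm_nonneg _)
      _ = n * (‖c i₀‖ * M) := by
          rw [Finset.sum_const, Finset.card_univ, hκ, nsmul_eq_mul]
  have h2 : Λ i₀ (T (A c)) = c i₀ := by
    rw [hA, Fintype.linearCombination_apply, map_sum, map_sum]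
    simp [hΛL]
  have h3 : ‖c i₀‖ ≤ D * (‖T - R‖ * (n * (‖c i₀‖ * M))) := by
    calc ‖c i₀‖ = ‖Λ i₀ (T (A c))‖ := by rw [h2]
      _ ≤ D * ‖T (A c)‖ := hΛ _ _
      _ = D * ‖(T - R) (A c)‖ := by rw [sub_apply, hc, sub_zero]
      _ ≤ D * (‖T - R‖ * ‖A c‖) := by gcongr; exact (T - R).le_opNorm _
      _ ≤ _ := by gcongr
  have hn' : (0 : ℝ) < n := by exact_mod_cast hn
  rw [div_le_iff₀ (by positivity)]
  have h4 : ‖c i₀‖ * 1 ≤ ‖c i₀‖ * (‖T - R‖ * (D * (n * M))) := by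
    rw [mul_one]; refine h3.trans (le_of_eq ?_); ring
  exact le_of_mul_le_mul_left h4 hpos

/-! ### Composition operators -/

/-- A compact subset of `φ(D)` with two points is covered by `φ` of a smaller concentric disk. -/
theorem exists_radius {φ : ℂ → ℂ} (hφ : DifferentiableOn ℂ φ unitDisk) {K : Set ℂ}
    (hK : IsCompact K) (hKφ : K ⊆ φ '' unitDisk) (hK2 : ∃ z ∈ K, ∃ w ∈ K, z ≠ w) :
    ∃ r : ℝ, 0 ≤ r ∧ r < 1 ∧ ∀ z ∈ K, ∃ u : ℂ, ‖u‖ ≤ r ∧ φ u = z := by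
  have hpre : IsPreconnected unitDisk :=
    unitDisk_eq_ball ▸ (convex_ball (0 : ℂ) 1).isPreconnected
  rcases (hφ.analyticOnNhd isOpen_unitDisk).is_constant_or_isOpen hpre with ⟨w₀, hw⟩ | hopen
  · obtain ⟨z, hz, w, hw', hne⟩ := hK2
    obtain ⟨u, hu, rfl⟩ := hKφ hz
    obtain ⟨v, hv, rfl⟩ := hKφ hw'
    exact absurd ((hw u hu).trans (hw v hv).symm) hne
  · set q : ℕ → ℝ := fun k => 1 - 1 / ((k : ℝ) + 1) with hq
    have hq1 : ∀ k, q k < 1 := fun k => by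
      have : (0 : ℝ) < 1 / ((k : ℝ) + 1) := by positivity
      simp only [hq]; linarith
    have hq0 : ∀ k, 0 ≤ q k := fun k => by
      have : 1 / ((k : ℝ) + 1) ≤ 1 := by
        rw [div_le_one (by positivity)]
        linarith [(Nat.cast_nonneg k : (0 : ℝ) ≤ k)]
      simp only [hq]; linarith
    have hmono : Monotone fun k => φ '' Metric.ball 0 (q k) := fun i j hij =>
      image_mono (Metric.ball_subset_ball (by
        simp only [hq]
        have : (i : ℝ) ≤ j := by exact_mod_cast hij
        gcongr))
    obtain ⟨k, hk⟩ := hK.elim_directed_cover (fun k => φ '' Metric.ball 0 (q k))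
      (fun k => hopen _ (by
        rw [unitDisk_eq_ball]; exact Metric.ball_subset_ball (hq1 k).le) Metric.isOpen_ball)
      (fun z hz => by
        obtain ⟨u, hu, rfl⟩ := hKφ hz
        obtain ⟨k, hk⟩ := exists_nat_one_div_lt (show (0 : ℝ) < 1 - ‖u‖ from sub_pos.2 hu)
        exact mem_iUnion.2 ⟨k, u, by
          rw [mem_ball_zero_iff]; simp only [hq]; linarith, rfl⟩)
      hmono.directed_le
    exact ⟨q k, hq0 k, hq1 k, fun z hz => by
      obtain ⟨u, hu, rfl⟩ := hk hz
      exact ⟨u, (mem_ball_zero_iff.1 hu).le, rfl⟩⟩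

/-- If `φ ∈ H_ω` and `‖φ‖_∞ < 1`, then
`β⁻(C_φ) = liminf aₙ(C_φ)^{1/n} ≥ e^{-1/capa(φ(D))}`. -/
theorem betaMinus_ge_expNegV_of_weighted
    (ω : ℝ → ℝ)
    (hω_cont : ContinuousOn ω (Set.Ico 0 1))
    (hω_pos : ∀ r ∈ Set.Ico (0:ℝ) 1, 0 < ω r)
    (hω_int : IntegrableOn ω (Set.Ico 0 1))
    (H : Type) [NormedAddCommGroup H] [InnerProductSpace ℂ H] [CompleteSpace H]
    (ι : H →ₗ[ℂ] (ℂ → ℂ))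
    (hι_mem : ∀ g : H, memHw ω (ι g))
    (hι_norm : ∀ g : H, ‖g‖ ^ 2 = hwNormSq ω (ι g))
    (hι_surj : ∀ f : ℂ → ℂ, memHw ω f → ∃ g : H, ∀ z ∈ unitDisk, ι g z = f z)
    (hι_inj : ∀ g : H, (∀ z ∈ unitDisk, ι g z = 0) → g = 0)
    (φ : ℂ → ℂ)
    (hφ_diff : DifferentiableOn ℂ φ unitDisk)
    (hφ_maps : Set.MapsTo φ unitDisk unitDisk)
    (hφ_mem : memHw ω φ)
    (ρ : ℝ) (hρ : ρ < 1) (hφ_bdd : ∀ z ∈ unitDisk, ‖φ z‖ ≤ ρ)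
    (Cφ : H →L[ℂ] H)
    (hCφ : ∀ g : H, ∀ z ∈ unitDisk, ι (Cφ g) z = ι g (φ z)) :
    expNegV (φ '' unitDisk)
      ≤ Filter.liminf (fun n : ℕ => approxNumber Cφ n ^ ((n : ℝ)⁻¹)) Filter.atTop := by
  -- constants independent of `n` in the lower bound for `a_n`
  have hlower : ∀ K : Set ℂ, (∀ z ∈ K, ‖z‖ ≤ ρ) → ∀ r : ℝ, 0 ≤ r → r < 1 →
      (∀ z ∈ K, ∃ u : ℂ, ‖u‖ ≤ r ∧ φ u = z) → ∃ C : ℝ, 0 < C ∧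
      ∀ (n : ℕ) (s : ℝ) (S : Finset ℂ), 0 < n → (S : Set ℂ) ⊆ K → S.card = n →
        (∀ a ∈ S, ∑ b ∈ S, grn a b ≤ n * s) →
        Real.exp (-(n * s)) / (C * (n : ℝ) ^ 2) ≤ approxNumber Cφ n := by
    intro K hKρ r hr0 hr1 hKr
    obtain ⟨D, hD, hDf⟩ := exists_eval_bound hω_cont hω_pos hr0 hr1
    set A : ℝ := 1 / (1 - ρ) ^ 2
    set W : ℝ := (∫ z in unitDisk, ω ‖z‖) / Real.pi
    have hW : 0 ≤ W := div_nonneg (setIntegral_nonneg isOpen_unitDisk.measurableSet fun z hz =>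
      (hω_pos ‖z‖ ⟨norm_nonneg z, hz⟩).le) Real.pi_pos.le
    have hnorm : ∀ h : H, ‖h‖ = Real.sqrt (hwNormSq ω (ι h)) := fun h => by
      rw [← hι_norm, Real.sqrt_sq (norm_nonneg _)]
    refine ⟨D * Real.sqrt (1 + A ^ 2 * W), by positivity, fun n s S hn hSK hc hpot => ?_⟩
    have hn1 : (1 : ℝ) ≤ n := by exact_mod_cast hn
    have hSρ : ∀ b ∈ S, ‖b‖ ≤ ρ := fun b hb => hKρ b (hSK hb)
    have hS1 : ∀ b ∈ S, ‖b‖ < 1 := fun b hb => (hSρ b hb).trans_lt hρ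
    -- `h a ∈ H` represents the Blaschke product with zeros `S \ {a}`
    have hex : ∀ a : S, ∃ h : H, (∀ z ∈ unitDisk, ι h z = blaschke (S.erase a) z) ∧
        ‖h‖ ≤ n * Real.sqrt (1 + A ^ 2 * W) := by
      intro a
      have hbl : ∀ z ∈ unitDisk, ∃ d : ℂ, HasDerivAt (blaschke (S.erase a)) d z ∧
          ‖blaschke (S.erase a) z‖ ≤ 1 ∧ ‖d‖ ≤ n * A := fun z hz => by
        obtain ⟨d, hd, h1, h2⟩ := blaschke_bounds hρ hz (S.erase a)
          fun b hb => hSρ b (Finset.mem_of_mem_erase hb)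
        refine ⟨d, hd, h1, h2.trans ?_⟩
        have : (((S.erase (a : ℂ)).card : ℕ) : ℝ) ≤ n := by
          rw [← hc]; exact_mod_cast Finset.card_erase_le
        gcongr
      obtain ⟨hmem, hle⟩ := memHw_of_bounded hω_pos hω_int (f := blaschke (S.erase a))
        (A := n * A)
        (fun z hz => by
          obtain ⟨d, hd, -⟩ := hbl z hz
          exact hd.differentiableAt.differentiableWithinAt)
        (fun z hz => by
          obtain ⟨d, -, h1, -⟩ := hbl z hz
          exact h1)
        (fun z hz => by
          obtain ⟨d, hd, -, h2⟩ := hbl z hz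
          rw [hd.deriv]; exact h2)
      obtain ⟨h, hh⟩ := hι_surj _ hmem
      refine ⟨h, hh, ?_⟩
      have hcongr : hwNormSq ω (ι h) = hwNormSq ω (blaschke (S.erase a)) := by
        unfold hwNormSq
        rw [hh 0 (by simp [unitDisk])]
        congr 2
        refine setIntegral_congr_fun isOpen_unitDisk.measurableSet fun z hz => ?_
        have : deriv (ι h) z = deriv (blaschke (S.erase a)) z :=
          Filter.EventuallyEq.deriv_eq
            (Filter.eventually_of_mem (isOpen_unitDisk.mem_nhds hz) hh)
        simp only [this]
      rw [hnorm, hcongr]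
      refine Real.sqrt_le_iff.2 ⟨by positivity, hle.trans ?_⟩
      rw [mul_pow _ (Real.sqrt _), Real.sq_sqrt (by positivity), mul_pow]
      have : (1 : ℝ) ≤ (n : ℝ) ^ 2 := one_le_pow₀ hn1
      change 1 + (n : ℝ) ^ 2 * A ^ 2 * W ≤ _
      linarith [mul_assoc ((n : ℝ) ^ 2) (A ^ 2) W]
    choose h hh hhn using hex
    have hpre : ∀ a : S, ∃ u : ℂ, ‖u‖ ≤ r ∧ φ u = a := fun a => hKr a (hSK a.2)
    choose u hu hφu using hpre
    have hval : ∀ a : S, Real.exp (-(n * s)) ≤ ‖blaschke (S.erase a) a‖ := fun a => by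
      rw [norm_blaschke_erase hS1 a.2]
      exact Real.exp_le_exp.2 (neg_le_neg (hpot a a.2))
    have hval0 : ∀ a : S, blaschke (S.erase a) a ≠ 0 := fun a =>
      norm_pos_iff.1 ((Real.exp_pos _).trans_le (hval a))
    have happ := le_approxNumber Cφ hn (by rw [Fintype.card_coe, hc])
      (fun a : S => (blaschke (S.erase a) a)⁻¹ • h a)
      (fun a : S => (LinearMap.proj (u a)).comp ι) (D := D)
      (M := (Real.exp (-(n * s)))⁻¹ * (n * Real.sqrt (1 + A ^ 2 * W))) hD (by positivity)
      (fun a => by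
        rw [norm_smul, norm_inv]
        gcongr
        · exact hval a
        · exact hhn a)
      (fun a y => by
        rw [hnorm y]
        exact hDf _ (hι_mem y) _ (hu a))
      (fun a b => by
        have hua : u a ∈ unitDisk := (hu a).trans_lt hr1
        have haD : (a : ℂ) ∈ unitDisk := hS1 a a.2
        simp only [LinearMap.comp_apply, LinearMap.proj_apply]
        rw [hCφ _ _ hua, hφu, map_smul, Pi.smul_apply, hh b _ haD, smul_eq_mul]
        split_ifs with hab
        · rw [hab]; exact inv_mul_cancel₀ (hval0 b)
        · rw [blaschke_eq_zero (Finset.mem_erase.2 ⟨fun e => hab (Subtype.ext e), a.2⟩),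
            mul_zero])
    refine le_trans (le_of_eq ?_) happ
    field_simp
  have hbdd : IsBoundedUnder (· ≤ ·) atTop
      (fun n : ℕ => approxNumber Cφ n ^ ((n : ℝ)⁻¹)) := by
    refine isBoundedUnder_of_eventually_le (a := max 1 ‖Cφ‖) ?_
    filter_upwards [eventually_gt_atTop 0] with n hn
    have hn1 : (1 : ℝ) ≤ n := by exact_mod_cast hn
    calc approxNumber Cφ n ^ ((n : ℝ)⁻¹) ≤ (max 1 ‖Cφ‖) ^ ((n : ℝ)⁻¹) :=
          Real.rpow_le_rpow (approxNumber_nonneg _ _)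
            ((approxNumber_le_norm Cφ hn).trans (le_max_right _ _)) (by positivity)
      _ ≤ (max 1 ‖Cφ‖) ^ (1 : ℝ) :=
          Real.rpow_le_rpow_of_exponent_le (le_max_left _ _) (inv_le_one_of_one_le₀ hn1)
      _ = _ := Real.rpow_one _
  refine le_of_forall_lt fun y hy => ?_
  obtain ⟨y', hyy', hy'⟩ := exists_between hy
  refine hyy'.trans_le (le_liminf_of_le hbdd.isCoboundedUnder_ge ?_)
  rcases le_or_gt y' 0 with hy0 | hy0
  · exact Eventually.of_forall fun n => hy0.trans (Real.rpow_nonneg (approxNumber_nonneg _ _) _)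
  have hV : greenV (φ '' unitDisk) ≠ ⊤ := fun hV => by
    rw [expNegV, if_pos hV] at hy'; linarith
  rw [expNegV, if_neg hV] at hy'
  obtain ⟨t, rfl⟩ : ∃ t, y' = Real.exp (-t) := ⟨-Real.log y', by rw [neg_neg, Real.exp_log hy0]⟩
  have hVt : greenV (φ '' unitDisk) < ENNReal.ofReal t := by
    rw [ENNReal.lt_ofReal_iff_toReal_lt hV]
    have := Real.exp_lt_exp.1 hy'
    linarith
  simp only [greenV, iInf_lt_iff] at hVt
  obtain ⟨μ, hμ, ⟨K, hKφ, hK, hμK⟩, hμt⟩ := hVt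
  have hItop : greenEnergy μ ≠ ⊤ := (hμt.trans ENNReal.ofReal_lt_top).ne
  rw [ENNReal.lt_ofReal_iff_toReal_lt hItop] at hμt
  obtain ⟨s, hs1, hs2⟩ := exists_between hμt
  have hKρ : ∀ z ∈ K, ‖z‖ ≤ ρ := fun z hz => by
    obtain ⟨u, hu, rfl⟩ := hKφ hz
    exact hφ_bdd u hu
  have hK1 : ∀ z ∈ K, ‖z‖ < 1 := fun z hz => (hKρ z hz).trans_lt hρ
  have hconf := exists_finEnergy_le μ hK1 hμK hItop
  -- a measure of finite energy is not carried by a single point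
  have hK2 : ∃ z ∈ K, ∃ w ∈ K, z ≠ w := by
    obtain ⟨S, hS, hc, -⟩ := hconf 2
    obtain ⟨z, hz, w, hw, hne⟩ := Finset.one_lt_card.1 (by omega : 1 < S.card)
    exact ⟨z, hS hz, w, hS hw, hne⟩
  obtain ⟨r, hr0, hr1, hKr⟩ := exists_radius hφ_diff hK hKφ hK2
  obtain ⟨C, hC, hCn⟩ := hlower K hKρ r hr0 hr1 hKr
  have hgrow : ∀ᶠ n : ℕ in atTop, C * (n : ℝ) ^ 2 ≤ Real.exp ((t - s) * n) := by
    have h1 := ((isLittleO_pow_exp_pos_mul_atTop (k := 2) (sub_pos.2 hs2)).bound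
      (inv_pos.2 hC))
    filter_upwards [tendsto_natCast_atTop_atTop.eventually h1] with n hn
    rw [Real.norm_of_nonneg (by positivity), Real.norm_of_nonneg (by positivity),
      le_inv_mul_iff₀ hC] at hn
    exact hn
  filter_upwards [exists_config grn_symm grn_self
    (fun a ha b hb => grn_nonneg (hK1 a ha) (hK1 b hb)) hconf hs1, hgrow,
    eventually_gt_atTop 0] with n ⟨S, hS, hc, hpot⟩ hn hn0
  have hn0' : (0 : ℝ) < n := by exact_mod_cast hn0
  have hfin : Real.exp (-(n * t)) ≤ approxNumber Cφ n := by
    refine le_trans ?_ (hCn n s S hn0 hS hc hpot)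
    rw [le_div_iff₀ (by positivity)]
    calc Real.exp (-(n * t)) * (C * (n : ℝ) ^ 2)
        ≤ Real.exp (-(n * t)) * Real.exp ((t - s) * n) := by gcongr
      _ = Real.exp (-(n * s)) := by rw [← Real.exp_add]; congr 1; ring
  calc Real.exp (-t) = Real.exp (-(n * t)) ^ ((n : ℝ)⁻¹) := by
        rw [← Real.exp_mul]; congr 1; field_simp
    _ ≤ _ := Real.rpow_le_rpow (Real.exp_pos _).le hfin (by positivity)


end
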